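/- arXiv:2412.07413 — 3 statements merged into one kernel-verified Lean document; each statement's English description precedes it below -/
import Mathlib

section
/- Let H be a separable complex Hilbert space and let {e_n}_{n≥0} be a Riesz basis of H with frame constants 0 < a ≤ A, i.e. a‖u‖² ≤ ∑_{n=0}^∞ |⟨u, e_n⟩|² ≤ A‖u‖² for all u ∈ H. If {d_n}_{n≥0} is a sequence in H such that ∑_{n=0}^∞ ‖d_n − e_n‖² < a²/A, then {d_n}_{n≥0} is also a Riesz basis of H. -/
open scoped ENNReal

/-- A sequence `e : ℕ → H` in a separable complex Hilbert space is a *Riesz basis* if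
(i) it is complete, (ii) the vectors are independent (an `ℓ²` combination summing to `0`
has all coefficients zero), and (iii) there are frame constants `0 < a ≤ A` with
`a‖u‖² ≤ ∑ |⟨u, eₙ⟩|² ≤ A‖u‖²` for all `u`. -/
def IsRieszBasis {H : Type*} [NormedAddCommGroup H] [InnerProductSpace ℂ H]
    (e : ℕ → H) : Prop :=
  (∀ u : H, (∀ n : ℕ, (inner ℂ u (e n) : ℂ) = 0) → u = 0) ∧
  (∀ c : ℕ → ℂ, Memℓp c 2 → HasSum (fun n => c n • e n) 0 → ∀ n, c n = 0) ∧
  (∃ a A : ℝ, 0 < a ∧ a ≤ A ∧ ∀ u : H,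
    a * ‖u‖ ^ 2 ≤ ∑' n : ℕ, ‖(inner ℂ u (e n) : ℂ)‖ ^ 2 ∧
    ∑' n : ℕ, ‖(inner ℂ u (e n) : ℂ)‖ ^ 2 ≤ A * ‖u‖ ^ 2)

lemma exists_analysis {H : Type*} [NormedAddCommGroup H] [InnerProductSpace ℂ H]
    (f : ℕ → H) (C : ℝ) (hs : ∀ u : H, Summable fun n : ℕ => ‖(inner ℂ u (f n) : ℂ)‖ ^ 2)
    (hC : ∀ u : H, ∑' n : ℕ, ‖(inner ℂ u (f n) : ℂ)‖ ^ 2 ≤ C * ‖u‖ ^ 2) :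
    ∃ T : H →L[ℂ] lp (fun _ : ℕ => ℂ) 2, (∀ u n, T u n = inner ℂ (f n) u) ∧
      (∀ u, ‖T u‖ ^ 2 = ∑' n : ℕ, ‖(inner ℂ u (f n) : ℂ)‖ ^ 2) := by
  have hmem : ∀ u : H, Memℓp (fun n : ℕ => (inner ℂ (f n) u : ℂ)) 2 := by
    intro u
    apply memℓp_gen
    have := hs u
    simpa [norm_inner_symm] using this
  let L : H →ₗ[ℂ] lp (fun _ : ℕ => ℂ) 2 :=
    { toFun := fun u => ⟨fun n => inner ℂ (f n) u, hmem u⟩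
      map_add' := by
        intro u v
        ext n
        exact inner_add_right _ _ _
      map_smul' := by
        intro c v
        ext n
        exact inner_smul_right _ _ _ }
  have hL : ∀ u n, L u n = inner ℂ (f n) u := fun u n => rfl
  have hnorm : ∀ u, ‖L u‖ ^ 2 = ∑' n : ℕ, ‖(inner ℂ u (f n) : ℂ)‖ ^ 2 := by
    intro u
    have h := lp.norm_rpow_eq_tsum (p := 2) (by norm_num) (L u)
    simp only [ENNReal.toReal_ofNat, Real.rpow_ofNat] at h
    rw [h]
    refine tsum_congr fun n => ?_
    rw [hL, norm_inner_symm]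
  refine ⟨L.mkContinuous (Real.sqrt (max C 0)) ?_, hL, hnorm⟩
  intro u
  rw [← Real.sqrt_sq (norm_nonneg (L u)), ← Real.sqrt_sq (norm_nonneg u), ← Real.sqrt_mul (le_max_right _ _)]
  apply Real.sqrt_le_sqrt
  rw [hnorm]
  refine (hC u).trans ?_
  gcongr
  exact le_max_left _ _

theorem riesz_basis_stability {H : Type*} [NormedAddCommGroup H] [InnerProductSpace ℂ H]
    [CompleteSpace H] [TopologicalSpace.SeparableSpace H]
    (e d : ℕ → H) (a A : ℝ) (ha : 0 < a) (haA : a ≤ A)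
    (he : IsRieszBasis e)
    (hframe : ∀ u : H,
      a * ‖u‖ ^ 2 ≤ ∑' n : ℕ, ‖(inner ℂ u (e n) : ℂ)‖ ^ 2 ∧
      ∑' n : ℕ, ‖(inner ℂ u (e n) : ℂ)‖ ^ 2 ≤ A * ‖u‖ ^ 2)
    (hsum : Summable fun n : ℕ => ‖d n - e n‖ ^ 2)
    (hlt : ∑' n : ℕ, ‖d n - e n‖ ^ 2 < a ^ 2 / A) :
    IsRieszBasis d := by
  set S := ∑' n : ℕ, ‖d n - e n‖ ^ 2 with hS
  have hS0 : 0 ≤ S := tsum_nonneg fun n => by positivity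
  have hA : 0 < A := ha.trans_le haA
  have hSa : S < a := by
    refine hlt.trans_le ?_
    rw [div_le_iff₀ hA]
    nlinarith
  have hse : ∀ u : H, Summable fun n : ℕ => ‖(inner ℂ u (e n) : ℂ)‖ ^ 2 := by
    intro u
    by_contra h
    have h1 := (hframe u).1
    rw [tsum_eq_zero_of_not_summable h] at h1
    have h2 : ‖u‖ ^ 2 = 0 := le_antisymm (by nlinarith [sq_nonneg ‖u‖]) (by positivity)
    have h3 : u = 0 := by simpa using h2
    apply h
    simp [h3, summable_zero]
  have hle : ∀ (u : H) (n : ℕ), ‖(inner ℂ u (d n - e n) : ℂ)‖ ^ 2 ≤ ‖u‖ ^ 2 * ‖d n - e n‖ ^ 2 := by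
    intro u n
    rw [← mul_pow]
    gcongr
    exact norm_inner_le_norm _ _
  have hsk : ∀ u : H, Summable fun n : ℕ => ‖(inner ℂ u (d n - e n) : ℂ)‖ ^ 2 := fun u =>
    Summable.of_nonneg_of_le (fun n => by positivity) (hle u) (hsum.mul_left _)
  have hkC : ∀ u : H, ∑' n : ℕ, ‖(inner ℂ u (d n - e n) : ℂ)‖ ^ 2 ≤ S * ‖u‖ ^ 2 := by
    intro u
    refine ((hsk u).tsum_le_tsum (hle u) (hsum.mul_left _)).trans ?_
    rw [tsum_mul_left, mul_comm]
  obtain ⟨T, hT, hTn⟩ := exists_analysis e A hse fun u => (hframe u).2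
  obtain ⟨K, hK, hKn⟩ := exists_analysis (fun n => d n - e n) S hsk hkC
  have hTlow : ∀ u, Real.sqrt a * ‖u‖ ≤ ‖T u‖ := by
    intro u
    apply le_of_sq_le_sq _ (norm_nonneg _)
    rw [mul_pow, Real.sq_sqrt ha.le, hTn]
    exact (hframe u).1
  have hKup : ∀ u, ‖K u‖ ≤ Real.sqrt S * ‖u‖ := by
    intro u
    apply le_of_sq_le_sq _ (by positivity)
    rw [mul_pow, Real.sq_sqrt hS0, hKn]
    exact hkC u
  have hsa : 0 < Real.sqrt a := Real.sqrt_pos.2 ha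
  have hss : Real.sqrt S < Real.sqrt a := Real.sqrt_lt_sqrt hS0 hSa
  have hD : ∀ u n, (T + K) u n = inner ℂ (d n) u := by
    intro u n
    have : (T + K) u n = T u n + K u n := rfl
    rw [this, hT, hK, ← inner_add_left]
    simp
  have hDn : ∀ u, ‖(T + K) u‖ ^ 2 = ∑' n : ℕ, ‖(inner ℂ u (d n) : ℂ)‖ ^ 2 := by
    intro u
    have h := lp.norm_rpow_eq_tsum (p := 2) (by norm_num) ((T + K) u)
    simp only [ENNReal.toReal_ofNat, Real.rpow_ofNat] at h
    rw [h]
    refine tsum_congr fun n => ?_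
    rw [hD, norm_inner_symm]
  have hDlow : ∀ u, (Real.sqrt a - Real.sqrt S) * ‖u‖ ≤ ‖(T + K) u‖ := by
    intro u
    have h1 := norm_sub_le (T u + K u) (K u)
    rw [add_sub_cancel_right] at h1
    have h2 := hTlow u
    have h3 := hKup u
    rw [add_apply]
    linarith
  have hsurj : ∀ c : lp (fun _ : ℕ => ℂ) 2, ∃ u, T u = c := by
    have hanti : AntilipschitzWith (Real.toNNReal (Real.sqrt a)⁻¹) T := by
      apply ContinuousLinearMap.antilipschitz_of_bound
      intro u
      rw [Real.coe_toNNReal _ (by positivity), inv_mul_eq_div, le_div_iff₀ hsa, mul_comm]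
      exact hTlow u
    have hcl : IsClosed (T.range : Set (lp (fun _ : ℕ => ℂ) 2)) := by
      have := hanti.isClosed_range T.uniformContinuous
      have h2 : (T.range : Set (lp (fun _ : ℕ => ℂ) 2)) = Set.range T := by
        ext x
        rfl
      rw [h2]
      exact this
    have hcomp : CompleteSpace T.range := hcl.completeSpace_coe
    have htop : T.range = ⊤ := by
      rw [← Submodule.orthogonal_eq_bot_iff, Submodule.eq_bot_iff]
      intro c hc
      have hadj : T.adjoint c = 0 := by
        apply ext_inner_right ℂ
        intro v
        rw [ContinuousLinearMap.adjoint_inner_left, inner_zero_left]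
        exact Submodule.inner_left_of_mem_orthogonal (K := T.range) ⟨v, rfl⟩ hc
      have hsing : HasSum (fun n => lp.single 2 n (c n)) c := lp.hasSum_single (by norm_num) c
      have h2 := T.adjoint.hasSum hsing
      rw [hadj] at h2
      have h3 : ∀ n, T.adjoint (lp.single 2 n (c n)) = c n • e n := by
        intro n
        apply ext_inner_right ℂ
        intro v
        rw [ContinuousLinearMap.adjoint_inner_left, lp.inner_single_left, hT, inner_smul_left]
        simp [mul_comm]
      have h4 : HasSum (fun n => c n • e n) 0 := by
        convert h2 using 2 with n
        exact (h3 n).symm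
      ext n
      exact he.2.1 c (lp.memℓp c) h4 n
    intro c
    have : c ∈ T.range := htop ▸ Submodule.mem_top
    exact this
  refine ⟨?_, ?_, ?_⟩
  · intro u hu
    have h1 : ‖(T + K) u‖ ^ 2 = 0 := by rw [hDn]; simp [hu]
    have h2 : ‖(T + K) u‖ = 0 := by simpa using h1
    have h3 := hDlow u
    rw [h2] at h3
    have : ‖u‖ ≤ 0 := by
      by_contra hh
      push Not at hh
      nlinarith [mul_pos (sub_pos.2 hss) hh]
    exact norm_le_zero_iff.1 this
  · intro c hc hsc
    obtain ⟨u, hu⟩ := hsurj ⟨c, hc⟩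
    have hDc : (inner ℂ ((T + K) u) (T u) : ℂ) = 0 := by
      have h1 := lp.hasSum_inner (𝕜 := ℂ) ((T + K) u) (T u)
      have h2 := (innerSL ℂ u).hasSum hsc
      rw [map_zero] at h2
      refine h1.unique ?_
      convert h2 using 2 with n
      rw [hD, hu]
      simp
    have h1 : ‖T u‖ ^ 2 ≤ ‖K u‖ * ‖T u‖ := by
      rw [add_apply, inner_add_left] at hDc
      have h2 : (inner ℂ (T u) (T u) : ℂ) = - inner ℂ (K u) (T u) := eq_neg_of_add_eq_zero_left hDc
      have h3 := congrArg norm h2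
      rw [norm_neg, inner_self_eq_norm_sq_to_K] at h3
      have h4 := norm_inner_le_norm (𝕜 := ℂ) (K u) (T u)
      rw [← h3] at h4
      simpa using h4
    have hu0 : u = 0 := by
      by_contra hne
      have hp : 0 < ‖u‖ := norm_pos_iff.2 hne
      have h2 := hTlow u
      have h3 := hKup u
      have h4 : ‖K u‖ < ‖T u‖ := by nlinarith
      have h5 : 0 < ‖T u‖ := (norm_nonneg _).trans_lt h4
      nlinarith
    intro n
    have : c n = T u n := by rw [hu]
    rw [this, hu0, map_zero]
    rfl
  · have hpos : 0 < Real.sqrt a - Real.sqrt S := sub_pos.2 hss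
    refine ⟨(Real.sqrt a - Real.sqrt S) ^ 2,
      max ((Real.sqrt a - Real.sqrt S) ^ 2) (‖T + K‖ ^ 2), by positivity, le_max_left _ _, ?_⟩
    intro u
    rw [← hDn]
    constructor
    · rw [← mul_pow]
      have := hDlow u
      gcongr
    · have h1 : ‖(T + K) u‖ ^ 2 ≤ ‖T + K‖ ^ 2 * ‖u‖ ^ 2 := by
        rw [← mul_pow]
        gcongr
        exact (T + K).le_opNorm u
      refine h1.trans ?_
      gcongr
      exact le_max_right _ _
end

section
/- Let H be a separable complex Hilbert space and let {e_n}_{n≥0} be an orthonormal basis of H. If {d_n}_{n≥0} is a sequence in H such that ∑_{n=0}^∞ ‖d_n − e_n‖² < 1, then {d_n}_{n≥0} is a Riesz basis of H. -/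
open scoped ENNReal

theorem riesz_basis_perturbation_of_orthonormal_basis
    {H : Type*} [NormedAddCommGroup H] [InnerProductSpace ℂ H]
    [CompleteSpace H] [TopologicalSpace.SeparableSpace H]
    (e d : ℕ → H) (he : Orthonormal ℂ e)
    (hspan : Dense (↑(Submodule.span ℂ (Set.range e)) : Set H))
    (hsum : Summable fun n : ℕ => ‖d n - e n‖ ^ 2)
    (hlt : ∑' n : ℕ, ‖d n - e n‖ ^ 2 < 1) :
    IsRieszBasis d := by
  set S := ∑' n : ℕ, ‖d n - e n‖ ^ 2 with hS
  have hS0 : 0 ≤ S := tsum_nonneg fun n => by positivity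
  obtain ⟨s, hs0, hs1, hSs⟩ : ∃ s : ℝ, 0 < s ∧ s < 1 ∧ S ≤ s ^ 2 := by
    refine ⟨Real.sqrt ((S + 1) / 2), Real.sqrt_pos.2 (by linarith), ?_, ?_⟩
    · rw [Real.sqrt_lt' one_pos]; linarith
    · rw [Real.sq_sqrt (by linarith)]; linarith
  -- Parseval
  have hpars : ∀ u : H, HasSum (fun n => ‖(inner ℂ u (e n) : ℂ)‖ ^ 2) (‖u‖ ^ 2) := by
    intro u
    let b : HilbertBasis ℕ ℂ H := HilbertBasis.mk he
      (by rw [Submodule.dense_iff_topologicalClosure_eq_top.1 hspan])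
    have hb : ∀ n, b n = e n := fun n => by
      simp [b]
    have h := b.hasSum_inner_mul_inner u u
    have h2 := Complex.hasSum_re h
    have h3 : ∀ n, (inner ℂ u (b n) * inner ℂ (b n) u : ℂ).re
        = ‖(inner ℂ u (e n) : ℂ)‖ ^ 2 := by
      intro n
      rw [hb, ← inner_conj_symm (e n) u, Complex.mul_conj, Complex.ofReal_re,
        Complex.normSq_eq_norm_sq]
    simp only [h3] at h2
    have h4 : (inner ℂ u u : ℂ).re = ‖u‖ ^ 2 := by
      rw [inner_self_eq_norm_sq_to_K]; norm_cast
    rwa [h4] at h2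
  have hyle : ∀ (u : H) n, ‖(inner ℂ u (d n - e n) : ℂ)‖ ^ 2 ≤ ‖u‖ ^ 2 * ‖d n - e n‖ ^ 2 := by
    intro u n
    rw [← mul_pow]
    exact pow_le_pow_left₀ (norm_nonneg _) (norm_inner_le_norm _ _) 2
  have hysum : ∀ u : H, Summable fun n => ‖(inner ℂ u (d n - e n) : ℂ)‖ ^ 2 := fun u =>
    Summable.of_nonneg_of_le (fun n => by positivity) (hyle u) (hsum.mul_left _)
  have hytsum : ∀ u : H, ∑' n, ‖(inner ℂ u (d n - e n) : ℂ)‖ ^ 2 ≤ s ^ 2 * ‖u‖ ^ 2 := by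
    intro u
    calc _ ≤ ∑' n, ‖u‖ ^ 2 * ‖d n - e n‖ ^ 2 :=
          (hysum u).tsum_le_tsum (hyle u) (hsum.mul_left _)
      _ = ‖u‖ ^ 2 * S := by rw [tsum_mul_left]
      _ ≤ _ := by nlinarith [sq_nonneg ‖u‖]
  have hup : ∀ (u : H) n, ‖(inner ℂ u (d n) : ℂ)‖ ^ 2 ≤
      2 * ‖(inner ℂ u (e n) : ℂ)‖ ^ 2 + 2 * ‖(inner ℂ u (d n - e n) : ℂ)‖ ^ 2 := by
    intro u n
    have h : ‖(inner ℂ u (d n) : ℂ)‖ ≤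
        ‖(inner ℂ u (e n) : ℂ)‖ + ‖(inner ℂ u (d n - e n) : ℂ)‖ := by
      have := norm_add_le (inner ℂ u (e n) : ℂ) (inner ℂ u (d n - e n))
      rwa [← inner_add_right, add_sub_cancel] at this
    nlinarith [norm_nonneg (inner ℂ u (d n) : ℂ), sq_nonneg
      (‖(inner ℂ u (e n) : ℂ)‖ - ‖(inner ℂ u (d n - e n) : ℂ)‖)]
  have hlow : ∀ (u : H) n, (1 - s) * ‖(inner ℂ u (e n) : ℂ)‖ ^ 2
      ≤ ‖(inner ℂ u (d n) : ℂ)‖ ^ 2 + (1 / s - 1) * ‖(inner ℂ u (d n - e n) : ℂ)‖ ^ 2 := by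
    intro u n
    have h : ‖(inner ℂ u (e n) : ℂ)‖ ≤
        ‖(inner ℂ u (d n) : ℂ)‖ + ‖(inner ℂ u (d n - e n) : ℂ)‖ := by
      have := norm_sub_le (inner ℂ u (d n) : ℂ) (inner ℂ u (d n - e n))
      rwa [← inner_sub_right, sub_sub_cancel] at this
    set x := ‖(inner ℂ u (e n) : ℂ)‖
    set z := ‖(inner ℂ u (d n) : ℂ)‖
    set y := ‖(inner ℂ u (d n - e n) : ℂ)‖
    have hx : 0 ≤ x := norm_nonneg _
    have hz : 0 ≤ z := norm_nonneg _
    have hy : 0 ≤ y := norm_nonneg _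
    have h1 : (1 - s) * x ^ 2 ≤ (1 - s) * (z + y) ^ 2 :=
      mul_le_mul_of_nonneg_left (pow_le_pow_left₀ hx h 2) (by linarith)
    have h2 : z ^ 2 + (1 / s - 1) * y ^ 2 - (1 - s) * (z + y) ^ 2
        = (s * z - (1 - s) * y) ^ 2 / s := by
      field_simp
      ring
    have h3 : 0 ≤ (s * z - (1 - s) * y) ^ 2 / s := by positivity
    linarith
  have hdsum : ∀ u : H, Summable fun n => ‖(inner ℂ u (d n) : ℂ)‖ ^ 2 := fun u =>
    Summable.of_nonneg_of_le (fun n => by positivity) (hup u)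
      (((hpars u).summable.mul_left 2).add ((hysum u).mul_left 2))
  have hA : ∀ u : H, ∑' n : ℕ, ‖(inner ℂ u (d n) : ℂ)‖ ^ 2 ≤ 4 * ‖u‖ ^ 2 := by
    intro u
    have h := (hdsum u).tsum_le_tsum (hup u)
      (((hpars u).summable.mul_left 2).add ((hysum u).mul_left 2))
    rw [((hpars u).summable.mul_left 2).tsum_add ((hysum u).mul_left 2), tsum_mul_left,
      tsum_mul_left, (hpars u).tsum_eq] at h
    have h1 := hytsum u
    have h2 : s ^ 2 * ‖u‖ ^ 2 ≤ 1 * ‖u‖ ^ 2 :=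
      mul_le_mul_of_nonneg_right (by nlinarith) (sq_nonneg _)
    linarith
  have ha : ∀ u : H, (1 - s) ^ 2 * ‖u‖ ^ 2 ≤ ∑' n : ℕ, ‖(inner ℂ u (d n) : ℂ)‖ ^ 2 := by
    intro u
    have h := ((hpars u).summable.mul_left (1 - s)).tsum_le_tsum (hlow u)
      ((hdsum u).add ((hysum u).mul_left (1 / s - 1)))
    rw [(hdsum u).tsum_add ((hysum u).mul_left (1 / s - 1)), tsum_mul_left,
      tsum_mul_left, (hpars u).tsum_eq] at h
    have hs' : 0 ≤ 1 / s - 1 := by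
      rw [sub_nonneg, le_div_iff₀ hs0]; linarith
    have h1 := mul_le_mul_of_nonneg_left (hytsum u) hs'
    have h2 : (1 / s - 1) * (s ^ 2 * ‖u‖ ^ 2) = (s - s ^ 2) * ‖u‖ ^ 2 := by
      field_simp
    nlinarith
  refine ⟨?_, ?_, (1 - s) ^ 2, 4, by nlinarith, by nlinarith, fun u => ⟨ha u, hA u⟩⟩
  · intro u hu
    have h := ha u
    simp only [hu] at h
    norm_num at h
    have h1 : 0 < (1 - s) ^ 2 := by nlinarith
    have h2 : ‖u‖ ^ 2 ≤ 0 := by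
      by_contra hc
      push Not at hc
      have := mul_pos h1 hc
      linarith
    have h3 : ‖u‖ = 0 := by nlinarith [norm_nonneg u]
    exact norm_eq_zero.1 h3
  · intro c _ hc n
    have hkey : ∀ F : Finset ℕ, (1 - s) * Real.sqrt (∑ i ∈ F, ‖c i‖ ^ 2)
        ≤ ‖∑ i ∈ F, c i • d i‖ := by
      intro F
      have h1 : ‖∑ i ∈ F, c i • e i‖ = Real.sqrt (∑ i ∈ F, ‖c i‖ ^ 2) := by
        rw [eq_comm, Real.sqrt_eq_iff_mul_self_eq (by positivity) (norm_nonneg _)]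
        have h := he.inner_sum c c F
        rw [inner_self_eq_norm_sq_to_K] at h
        have h' : ∀ i, (starRingEnd ℂ) (c i) * c i = ((‖c i‖ ^ 2 : ℝ) : ℂ) := by
          intro i
          rw [mul_comm, Complex.mul_conj, Complex.normSq_eq_norm_sq]
        simp only [h'] at h
        rw [← sq]
        apply Complex.ofReal_injective
        push_cast
        simpa using h.symm
      have h2 : ‖∑ i ∈ F, c i • (d i - e i)‖ ≤ s * Real.sqrt (∑ i ∈ F, ‖c i‖ ^ 2) := by
        calc _ ≤ ∑ i ∈ F, ‖c i‖ * ‖d i - e i‖ := by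
              refine (norm_sum_le _ _).trans (le_of_eq ?_)
              simp [norm_smul]
          _ ≤ Real.sqrt (∑ i ∈ F, ‖c i‖ ^ 2) * Real.sqrt (∑ i ∈ F, ‖d i - e i‖ ^ 2) :=
              Real.sum_mul_le_sqrt_mul_sqrt _ _ _
          _ ≤ Real.sqrt (∑ i ∈ F, ‖c i‖ ^ 2) * s := by
              refine mul_le_mul_of_nonneg_left ?_ (Real.sqrt_nonneg _)
              rw [Real.sqrt_le_left hs0.le]
              exact (hsum.sum_le_tsum F (fun i _ => by positivity)).trans hSs
          _ = _ := mul_comm _ _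
      have h3 : ∑ i ∈ F, c i • e i = ∑ i ∈ F, c i • d i - ∑ i ∈ F, c i • (d i - e i) := by
        rw [← Finset.sum_sub_distrib]
        refine Finset.sum_congr rfl fun i _ => ?_
        rw [← smul_sub, sub_sub_cancel]
      have h4 := norm_sub_le (∑ i ∈ F, c i • d i) (∑ i ∈ F, c i • (d i - e i))
      rw [← h3, h1] at h4
      linarith
    have hlim : Filter.Tendsto (fun F : Finset ℕ => ‖∑ i ∈ F, c i • d i‖) Filter.atTop
        (nhds 0) := by
      have := Filter.Tendsto.norm hc
      simpa using this
    have hle : (1 - s) * ‖c n‖ ≤ 0 := by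
      refine ge_of_tendsto hlim ?_
      filter_upwards [Filter.eventually_ge_atTop ({n} : Finset ℕ)] with F hF
      refine le_trans (mul_le_mul_of_nonneg_left ?_ (by linarith)) (hkey F)
      refine Real.le_sqrt_of_sq_le ?_
      exact Finset.single_le_sum (f := fun i => ‖c i‖ ^ 2) (fun i _ => by positivity)
        (hF (Finset.mem_singleton_self n))
    have : ‖c n‖ = 0 := by nlinarith [norm_nonneg (c n)]
    exact norm_eq_zero.1 this
end

section
/- Let p₁, p₂ be continuously differentiable real-valued functions on [0,1], let q₁, q₂ be continuous real-valued functions on [0,1], let λ₁, λ₂ ∈ ℝ, and let y₁, y₂ be real-valued C⁴ functions on [0,1] such that y_i''''(x) − (p_i(x) y_i'(x))' + q_i(x) y_i(x) = λ_i y_i(x) for all x ∈ [0,1] and i = 1,2, and both satisfy the Dirichlet–Neumann boundary conditions y_i(0) = y_i''(0) = y_i'(1) = y_i'''(1) = 0. Then (λ₁ − λ₂) ∫₀¹ y₁(x) y₂(x) dx = ∫₀¹ (p₁(x) − p₂(x)) y₁'(x) y₂'(x) dx + ∫₀¹ (q₁(x) − q₂(x)) y₁(x) y₂(x) dx. -/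
open Real

theorem hasDerivAt_iter_aux {y : ℝ → ℝ} (hy : ContDiff ℝ 4 y) (k : ℕ) (hk : k < 4) (x : ℝ) :
    HasDerivAt (iteratedDeriv k y) (iteratedDeriv (k + 1) y x) x := by
  rw [iteratedDeriv_succ]
  exact ((hy.differentiable_iteratedDeriv k (by exact_mod_cast hk)) x).hasDerivAt

theorem form_identity_dirichlet_neumann
    (p₁ p₂ q₁ q₂ y₁ y₂ : ℝ → ℝ) (l₁ l₂ : ℝ)
    (hp₁ : ContDiff ℝ 1 p₁) (hp₂ : ContDiff ℝ 1 p₂)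
    (hq₁ : Continuous q₁) (hq₂ : Continuous q₂)
    (hy₁ : ContDiff ℝ 4 y₁) (hy₂ : ContDiff ℝ 4 y₂)
    (heq₁ : ∀ x ∈ Set.Icc (0 : ℝ) 1,
      iteratedDeriv 4 y₁ x - deriv (fun t => p₁ t * deriv y₁ t) x + q₁ x * y₁ x = l₁ * y₁ x)
    (heq₂ : ∀ x ∈ Set.Icc (0 : ℝ) 1,
      iteratedDeriv 4 y₂ x - deriv (fun t => p₂ t * deriv y₂ t) x + q₂ x * y₂ x = l₂ * y₂ x)
    (hbc₁ : y₁ 0 = 0 ∧ iteratedDeriv 2 y₁ 0 = 0 ∧ deriv y₁ 1 = 0 ∧ iteratedDeriv 3 y₁ 1 = 0)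
    (hbc₂ : y₂ 0 = 0 ∧ iteratedDeriv 2 y₂ 0 = 0 ∧ deriv y₂ 1 = 0 ∧ iteratedDeriv 3 y₂ 1 = 0) :
    (l₁ - l₂) * ∫ x in (0:ℝ)..1, y₁ x * y₂ x =
      (∫ x in (0:ℝ)..1, (p₁ x - p₂ x) * deriv y₁ x * deriv y₂ x) +
        ∫ x in (0:ℝ)..1, (q₁ x - q₂ x) * y₁ x * y₂ x := by
  obtain ⟨a0, a2, a1, a3⟩ := hbc₁
  obtain ⟨b0, b2, b1, b3⟩ := hbc₂
  have cy₁ := hy₁.continuous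
  have cy₂ := hy₂.continuous
  have cd₁ : Continuous (deriv y₁) := hy₁.continuous_deriv (by norm_num)
  have cd₂ : Continuous (deriv y₂) := hy₂.continuous_deriv (by norm_num)
  have cp₁ := hp₁.continuous
  have cp₂ := hp₂.continuous
  have A0 := hasDerivAt_iter_aux hy₁ 0 (by norm_num)
  have A1 := hasDerivAt_iter_aux hy₁ 1 (by norm_num)
  have A2 := hasDerivAt_iter_aux hy₁ 2 (by norm_num)
  have A3 := hasDerivAt_iter_aux hy₁ 3 (by norm_num)
  have B0 := hasDerivAt_iter_aux hy₂ 0 (by norm_num)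
  have B1 := hasDerivAt_iter_aux hy₂ 1 (by norm_num)
  have B2 := hasDerivAt_iter_aux hy₂ 2 (by norm_num)
  have B3 := hasDerivAt_iter_aux hy₂ 3 (by norm_num)
  simp only [iteratedDeriv_zero, iteratedDeriv_one, zero_add, Nat.reduceAdd] at A0 A1 A2 A3 B0 B1 B2 B3
  have P1 : ∀ x, HasDerivAt (fun t => p₁ t * deriv y₁ t) (deriv (fun t => p₁ t * deriv y₁ t) x) x :=
    fun x => (((hp₁.differentiable (by norm_num)) x).mul (A1 x).differentiableAt).hasDerivAt
  have P2 : ∀ x, HasDerivAt (fun t => p₂ t * deriv y₂ t) (deriv (fun t => p₂ t * deriv y₂ t) x) x :=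
    fun x => (((hp₂.differentiable (by norm_num)) x).mul (B1 x).differentiableAt).hasDerivAt
  have key : ∫ x in (0:ℝ)..1, ((l₁ - l₂) * (y₁ x * y₂ x)
      - (p₁ x - p₂ x) * deriv y₁ x * deriv y₂ x - (q₁ x - q₂ x) * y₁ x * y₂ x) = 0 := by
    rw [intervalIntegral.integral_eq_sub_of_hasDerivAt
      (f := fun x => iteratedDeriv 3 y₁ x * y₂ x - iteratedDeriv 2 y₁ x * deriv y₂ x
        + deriv y₁ x * iteratedDeriv 2 y₂ x - y₁ x * iteratedDeriv 3 y₂ x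
        - (p₁ x * deriv y₁ x) * y₂ x + (p₂ x * deriv y₂ x) * y₁ x)]
    · simp [a0, a1, a2, a3, b0, b1, b2, b3]
    · intro x hx
      rw [Set.uIcc_of_le zero_le_one] at hx
      have e1 := heq₁ x hx
      have e2 := heq₂ x hx
      have H := ((((((A3 x).mul (B0 x)).sub ((A2 x).mul (B1 x))).add ((A1 x).mul (B2 x))).sub
        ((A0 x).mul (B3 x))).sub ((P1 x).mul (B0 x))).add ((P2 x).mul (A0 x))
      refine H.congr_deriv ?_
      linear_combination (-y₂ x) * (-e1) - y₁ x * e2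
    · exact Continuous.intervalIntegrable (by fun_prop) _ _
  rw [intervalIntegral.integral_sub, intervalIntegral.integral_sub,
    intervalIntegral.integral_const_mul] at key
  · linarith
  all_goals exact Continuous.intervalIntegrable (by fun_prop) _ _
end
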